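/- arXiv:1409.3159 — 2 statements merged into one kernel-verified Lean document; each statement's English description precedes it below -/
import Mathlib

section
/- Let G be a connected graph with t_k ≥ t_{k+1} − 1 for some positive integer k. Then every largest k-ended tree in G is a dominating tree, i.e., the set of vertices of G not on the tree is an independent set. (Proposition 2) -/
open SimpleGraph

variable {V : Type*}

/-- A set of vertices is independent in `G`. -/
def IsIndSet (G : SimpleGraph V) (s : Set V) : Prop :=
  ∀ ⦃u⦄, u ∈ s → ∀ ⦃v⦄, v ∈ s → ¬ G.Adj u v

/-- The number of end-vertices (vertices of degree one) of a subgraph `H`. -/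
noncomputable def endVertexCount {G : SimpleGraph V} (H : G.Subgraph) : ℕ :=
  {v : V | v ∈ H.verts ∧ (H.neighborSet v).ncard = 1}.ncard

/-- `H` is a cycle; a single vertex and a single edge are regarded as
simple cycles of orders 1 and 2, respectively. -/
def IsCycleSubgraph {G : SimpleGraph V} (H : G.Subgraph) : Prop :=
  H.Connected ∧ (H.verts.ncard ≤ 2 ∨ ∀ v ∈ H.verts, (H.neighborSet v).ncard = 2)

/-- `H` is a `k`-ended tree in `G`: a tree with at most `k` end-vertices (leaves);
a cycle is regarded as a 1-ended tree. -/
def IsKEndedTree (G : SimpleGraph V) (k : ℕ) (H : G.Subgraph) : Prop :=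
  (H.coe.IsTree ∧ endVertexCount H ≤ k) ∨ (1 ≤ k ∧ IsCycleSubgraph H)

/-- `t k`: the order of a largest `k`-ended tree in `G`. -/
noncomputable def maxKEndedOrder (G : SimpleGraph V) (k : ℕ) : ℕ :=
  sSup {n | ∃ H : G.Subgraph, IsKEndedTree G k H ∧ H.verts.ncard = n}

/-- `σ m`: the minimum degree sum over independent sets of `m` vertices of `G`,
and `+∞` if the independence number of `G` is less than `m`. -/
noncomputable def minDegreeSum (G : SimpleGraph V) [Fintype V] [DecidableRel G.Adj]
    (m : ℕ) : ℕ∞ :=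
  ⨅ s ∈ {s : Finset V | s.card = m ∧ IsIndSet G ↑s}, (∑ v ∈ s, G.degree v : ℕ∞)

section DominatingKEndedTrees

variable {G : SimpleGraph V}

/-- The set of end-vertices of a subgraph. -/
def endVertices (H : G.Subgraph) : Set V :=
  {v | v ∈ H.verts ∧ (H.neighborSet v).ncard = 1}

theorem endVertexCount_eq_ncard (H : G.Subgraph) : endVertexCount H = (endVertices H).ncard := rfl

theorem le_maxKEndedOrder [Finite V] {k : ℕ} {H : G.Subgraph} (hH : IsKEndedTree G k H) :
    H.verts.ncard ≤ maxKEndedOrder G k := by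
  refine le_csSup ⟨Nat.card V, ?_⟩ ⟨H, hH, rfl⟩
  rintro _ ⟨K, -, rfl⟩
  exact Set.ncard_le_card _

theorem coe_isTree_iff [Finite V] (H : G.Subgraph) :
    H.coe.IsTree ↔ H.Connected ∧ H.edgeSet.ncard + 1 = H.verts.ncard := by
  rw [isTree_iff_connected_and_card, Subgraph.connected_iff', ← H.image_coe_edgeSet_coe,
    Set.ncard_image_of_injective _ (Sym2.map.injective Subtype.val_injective),
    Nat.card_coe_set_eq, Nat.card_coe_set_eq]

/-- In a connected graph, an edge avoiding a nonempty set `S` yields a path on two vertices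
that avoids `S` and whose first vertex is adjacent to `S`. -/
theorem exists_adj_adj_of_adj_notMem (hG : G.Connected) {S : Set V} (hS : S.Nonempty)
    {u v : V} (hu : u ∉ S) (hv : v ∉ S) (huv : G.Adj u v) :
    ∃ x ∈ S, ∃ y ∉ S, ∃ z ∉ S, G.Adj x y ∧ G.Adj y z := by
  obtain ⟨a, ha⟩ := hS
  obtain ⟨p⟩ := hG.preconnected a u
  obtain ⟨d, -, hfst, hsnd⟩ := p.exists_boundary_dart
    {w | w ∈ S ∨ ∀ z ∉ S, ¬ G.Adj w z} (Or.inl ha) (by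
      rintro (h | h)
      exacts [hu h, h v hv huv])
  simp only [Set.mem_ofPred_eq, not_or, not_forall, not_not] at hfst hsnd
  obtain ⟨hy, z, hz, hyz⟩ := hsnd
  exact ⟨d.fst, hfst.resolve_right fun h => h _ hy d.adj, d.snd, hy, z, hz, d.adj, hyz⟩

section AttachVertex

variable {T : G.Subgraph} {x y : V}

theorem verts_sup_subgraphOfAdj (hx : x ∈ T.verts) (hxy : G.Adj x y) :
    (T ⊔ G.subgraphOfAdj hxy).verts = insert y T.verts := by
  ext v
  simp only [Subgraph.verts_sup, subgraphOfAdj_verts, Set.mem_union, Set.mem_insert_iff,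
    Set.mem_singleton_iff]
  grind

theorem isTree_sup_subgraphOfAdj [Finite V]
    (hT : T.coe.IsTree) (hx : x ∈ T.verts) (hy : y ∉ T.verts)
    (hxy : G.Adj x y) : (T ⊔ G.subgraphOfAdj hxy).coe.IsTree := by
  rw [coe_isTree_iff] at hT ⊢
  refine ⟨Subgraph.connected_sup hT.1.preconnected
    (Subgraph.subgraphOfAdj_connected hxy).preconnected ⟨x, hx, by simp⟩, ?_⟩
  have he : s(x, y) ∉ T.edgeSet := fun h => hy (T.edge_vert (Subgraph.Adj.symm h))
  rw [verts_sup_subgraphOfAdj hx, Set.ncard_insert_of_notMem hy, Subgraph.edgeSet_sup,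
    edgeSet_subgraphOfAdj, Set.union_singleton, Set.ncard_insert_of_notMem he, hT.2]

theorem endVertices_sup_subgraphOfAdj_subset_insert (hx : x ∈ T.verts) (hxy : G.Adj x y) :
    endVertices (T ⊔ G.subgraphOfAdj hxy) ⊆ insert x (insert y (endVertices T)) := by
  rintro v ⟨hv, hdeg⟩
  by_cases hvx : v = x
  · exact Or.inl hvx
  by_cases hvy : v = y
  · exact Or.inr (Or.inl hvy)
  rw [Subgraph.neighborSet_sup, neighborSet_subgraphOfAdj_of_ne_of_ne hxy hvx hvy,
    Set.union_empty] at hdeg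
  rw [verts_sup_subgraphOfAdj hx] at hv
  exact Or.inr (Or.inr ⟨hv.resolve_left hvy, hdeg⟩)

theorem endVertices_sup_subgraphOfAdj_subset_of_nonempty [Finite V]
    (hx : x ∈ T.verts) (hy : y ∉ T.verts)
    (hxy : G.Adj x y) (hne : (T.neighborSet x).Nonempty) :
    endVertices (T ⊔ G.subgraphOfAdj hxy) ⊆ insert y (endVertices T \ {x}) := by
  intro v hv
  have hvx : v ≠ x := by
    rintro rfl
    obtain ⟨w, hw⟩ := hne
    have hwy : w = y := (Set.ncard_le_one_iff (Set.toFinite _)).1 hv.2.le (Or.inl hw)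
      (Or.inr (by simp))
    exact hy (hwy ▸ T.edge_vert (Subgraph.Adj.symm hw))
  rcases endVertices_sup_subgraphOfAdj_subset_insert hx hxy hv with h | h | h
  exacts [absurd h hvx, Or.inl h, Or.inr ⟨h, hvx⟩]

end AttachVertex

/-- Attaching a path with two new vertices to a tree at `x`. -/
theorem exists_isTree_ncard_add_two [Finite V] {T : G.Subgraph} {x y z : V} (hT : T.coe.IsTree)
    (hx : x ∈ T.verts) (hy : y ∉ T.verts) (hz : z ∉ T.verts) (hxy : G.Adj x y)
    (hyz : G.Adj y z) :
    ∃ K : G.Subgraph, K.coe.IsTree ∧ K.verts.ncard = T.verts.ncard + 2 ∧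
      ((T.neighborSet x).Nonempty → endVertices K ⊆ insert z (endVertices T \ {x})) ∧
      endVertices K ⊆ insert x (insert z (endVertices T)) := by
  have hv := verts_sup_subgraphOfAdj hx hxy
  have hy' : y ∈ (T ⊔ G.subgraphOfAdj hxy).verts := by simp [hv]
  have hz' : z ∉ (T ⊔ G.subgraphOfAdj hxy).verts := by
    rw [hv]
    rintro (h | h)
    exacts [hyz.ne h.symm, hz h]
  have hsub := endVertices_sup_subgraphOfAdj_subset_of_nonempty hy' hz' hyz
    ⟨x, Or.inr (by simp)⟩
  refine ⟨_, isTree_sup_subgraphOfAdj (isTree_sup_subgraphOfAdj hT hx hy hxy) hy' hz' hyz,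
    ?_, fun hne v hvK => ?_, fun v hvK => ?_⟩
  · rw [verts_sup_subgraphOfAdj hy', Set.ncard_insert_of_notMem hz', hv,
      Set.ncard_insert_of_notMem hy]
  · rcases hsub hvK with h | ⟨h, hvy⟩
    · exact Or.inl h
    · exact Or.inr ((endVertices_sup_subgraphOfAdj_subset_of_nonempty hx hy hxy hne h).resolve_left
        hvy)
  · rcases hsub hvK with h | ⟨h, hvy⟩
    · exact Or.inr (Or.inl h)
    · rcases endVertices_sup_subgraphOfAdj_subset_insert hx hxy h with h | h | h
      exacts [Or.inl h, absurd h hvy, Or.inr (Or.inr h)]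

theorem verts_eq_singleton_of_neighborSet_eq_empty {H : G.Subgraph} (hH : H.Connected) {x : V}
    (hx : x ∈ H.verts) (h : H.neighborSet x = ∅) : H.verts = {x} := by
  refine Set.eq_singleton_iff_unique_mem.2 ⟨hx, fun w hw => ?_⟩
  by_contra hne
  obtain ⟨p⟩ := hH.preconnected.coe ⟨x, hx⟩ ⟨w, hw⟩
  cases p with
  | nil => exact hne rfl
  | cons hadj _ => exact (h ▸ (show _ ∈ H.neighborSet x from hadj) : _ ∈ (∅ : Set V))

theorem endVertices_subset_verts (H : G.Subgraph) : endVertices H ⊆ H.verts := fun _ h => h.1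

/-- Attaching a two-vertex path to a tree yields a `(k + 1)`-ended tree if the tree has at most `k`
end-vertices, or at most one end-vertex other than the attaching vertex. -/
theorem exists_isKEndedTree_ncard_add_two [Finite V] {T : G.Subgraph} {x y z : V} {k : ℕ}
    (hk : 1 ≤ k) (hT : T.coe.IsTree) (hx : x ∈ T.verts) (hy : y ∉ T.verts) (hz : z ∉ T.verts)
    (hxy : G.Adj x y) (hyz : G.Adj y z)
    (h : (endVertices T).ncard ≤ k ∨ (endVertices T \ {x}).ncard ≤ 1) :
    ∃ K : G.Subgraph, IsKEndedTree G (k + 1) K ∧ K.verts.ncard = T.verts.ncard + 2 := by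
  obtain ⟨K, hK, hcard, hne, hall⟩ := exists_isTree_ncard_add_two hT hx hy hz hxy hyz
  refine ⟨K, Or.inl ⟨hK, ?_⟩, hcard⟩
  rw [endVertexCount_eq_ncard]
  rcases (T.neighborSet x).eq_empty_or_nonempty with h0 | h0
  · have hverts := verts_eq_singleton_of_neighborSet_eq_empty ((coe_isTree_iff T).1 hT).1 hx h0
    have hsub : endVertices K ⊆ {x, z} := fun v hv => by
      rcases hall hv with h | h | h
      exacts [Or.inl h, Or.inr h, Or.inl (hverts.subset (endVertices_subset_verts T h))]
    have := (Set.ncard_le_ncard hsub).trans (Set.ncard_insert_le x {z})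
    rw [Set.ncard_singleton] at this
    omega
  · have h1 := (Set.ncard_le_ncard (hne h0)).trans (Set.ncard_insert_le _ _)
    have h2 : (endVertices T \ {x}).ncard ≤ (endVertices T).ncard :=
      Set.ncard_le_ncard Set.sdiff_subset
    omega

theorem coe_isTree_of_ncard_verts_le_two [Finite V] {H : G.Subgraph} (hH : H.Connected)
    (h : H.verts.ncard ≤ 2) : H.coe.IsTree := by
  have := Fintype.ofFinite H.verts
  refine ⟨hH.coe, fun v p hp => ?_⟩
  have h1 := hp.three_le_length
  have h2 := hp.support_nodup.length_le_card
  rw [List.length_tail, Walk.length_support, ← Nat.card_eq_fintype_card,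
    Nat.card_coe_set_eq] at h2
  omega

theorem ncard_edgeSet_of_ncard_neighborSet_eq_two [Finite V] {H : G.Subgraph}
    (h : ∀ v ∈ H.verts, (H.neighborSet v).ncard = 2) : H.edgeSet.ncard = H.verts.ncard := by
  classical
  have := Fintype.ofFinite V
  have hsum := H.coe.sum_degrees_eq_twice_card_edges
  have hdeg : ∀ (v : H.verts) [Fintype (H.coe.neighborSet v)], H.coe.degree v = 2 := fun v _ => by
    rw [Subgraph.coe_degree, ← h v v.2, Subgraph.degree, ← Nat.card_eq_fintype_card,
      Nat.card_coe_set_eq]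
  simp only [hdeg] at hsum
  rw [Finset.sum_const, Finset.card_univ,
    ← Nat.card_eq_fintype_card, Nat.card_coe_set_eq, edgeFinset_card, ← Nat.card_eq_fintype_card,
    Nat.card_coe_set_eq] at hsum
  rw [← H.image_coe_edgeSet_coe,
    Set.ncard_image_of_injective _ (Sym2.map.injective Subtype.val_injective)]
  simp only [smul_eq_mul] at hsum
  omega

/-- Deleting an edge `xw` from a cycle leaves a path with ends `x` and `w`. -/
theorem exists_isTree_endVertices_subset_pair [Finite V] {H : G.Subgraph} (hH : H.Connected)
    (h : ∀ v ∈ H.verts, (H.neighborSet v).ncard = 2) {x : V} (hx : x ∈ H.verts) :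
    ∃ T : G.Subgraph, ∃ w, T.coe.IsTree ∧ T.verts = H.verts ∧ endVertices T ⊆ {x, w} := by
  obtain ⟨w, hw⟩ : (H.neighborSet x).Nonempty :=
    Set.nonempty_of_ncard_ne_zero (by rw [h x hx]; decide)
  have hadj : H.Adj x w := hw
  have hcyc : H.coe.IsCycles := fun v _ => by
    rw [← h v v.2, ← Nat.card_coe_set_eq, ← Nat.card_coe_set_eq]
    exact Nat.card_congr (Subgraph.coeNeighborSetEquiv v)
  have hreach := hcyc.reachable_deleteEdges (v := ⟨x, hx⟩) (w := ⟨w, hadj.snd_mem⟩) hadj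
  have hconn := Connected.connected_delete_edge_of_not_isBridge hH.coe
    (x := ⟨x, hx⟩) (y := ⟨w, hadj.snd_mem⟩) (fun hb => hb hreach)
  rw [Subgraph.deleteEdges_coe_eq, Set.image_singleton, Sym2.map_mk] at hconn
  refine ⟨H.deleteEdges {s(x, w)}, w, (coe_isTree_iff _).2 ⟨⟨hconn⟩, ?_⟩, rfl, ?_⟩
  · have hedge : (H.deleteEdges {s(x, w)}).edgeSet = H.edgeSet \ {s(x, w)} := by
      ext e
      induction e using Sym2.ind with | h a b => simp
    rw [hedge, Set.ncard_sdiff_singleton_add_one (show s(x, w) ∈ H.edgeSet from hadj),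
      Subgraph.deleteEdges_verts, ncard_edgeSet_of_ncard_neighborSet_eq_two h]
  · rintro v ⟨hv, hdeg⟩
    by_contra hne
    simp only [Set.mem_insert_iff, Set.mem_singleton_iff, not_or] at hne
    have hnbr : (H.deleteEdges {s(x, w)}).neighborSet v = H.neighborSet v := by
      ext b
      simp [hne.1, hne.2]
    rw [hnbr, h v hv] at hdeg
    exact absurd hdeg (by decide)

theorem IsKEndedTree.connected {k : ℕ} {H : G.Subgraph} (hH : IsKEndedTree G k H) :
    H.Connected := by
  rcases hH with h | h
  exacts [⟨h.1.connected⟩, h.2.1]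

/-- A `k`-ended tree to which a two-vertex path can be attached yields a `(k + 1)`-ended tree
with two more vertices. -/
theorem IsKEndedTree.exists_ncard_add_two [Finite V] {k : ℕ} (hk : 1 ≤ k) {H : G.Subgraph}
    (hH : IsKEndedTree G k H) {x y z : V} (hx : x ∈ H.verts) (hy : y ∉ H.verts)
    (hz : z ∉ H.verts) (hxy : G.Adj x y) (hyz : G.Adj y z) :
    ∃ K : G.Subgraph, IsKEndedTree G (k + 1) K ∧ K.verts.ncard = H.verts.ncard + 2 := by
  rcases hH with ⟨hT, hle⟩ | ⟨-, hconn, hle | hreg⟩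
  · exact exists_isKEndedTree_ncard_add_two hk hT hx hy hz hxy hyz (Or.inl hle)
  · refine exists_isKEndedTree_ncard_add_two hk (coe_isTree_of_ncard_verts_le_two hconn hle) hx hy
      hz hxy hyz (Or.inr ?_)
    have h1 : (endVertices H \ {x}).ncard ≤ (H.verts \ {x}).ncard :=
      Set.ncard_le_ncard (Set.sdiff_subset_sdiff_left (endVertices_subset_verts H))
    have h2 := Set.ncard_sdiff_singleton_add_one hx
    omega
  · obtain ⟨T, w, hT, hverts, hends⟩ := exists_isTree_endVertices_subset_pair hconn hreg hx
    rw [← hverts] at hx hy hz ⊢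
    refine exists_isKEndedTree_ncard_add_two hk hT hx hy hz hxy hyz (Or.inr ?_)
    refine (Set.ncard_le_ncard (t := {w}) fun v hv => ?_).trans (Set.ncard_singleton w).le
    exact (hends hv.1).resolve_left hv.2

end DominatingKEndedTrees

/-- **Proposition 2.** If `G` is connected and `t_k ≥ t_{k+1} - 1`, then every
largest `k`-ended tree in `G` is a dominating tree. -/
theorem proposition2 [Fintype V] (G : SimpleGraph V) (hG : G.Connected)
    (k : ℕ) (hk : 1 ≤ k)
    (h : maxKEndedOrder G k + 1 ≥ maxKEndedOrder G (k + 1)) :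
    ∀ H : G.Subgraph, IsKEndedTree G k H → H.verts.ncard = maxKEndedOrder G k →
      IsIndSet G H.vertsᶜ := by
  intro H hH hcard u hu v hv huv
  obtain ⟨x, hx, y, hy, z, hz, hxy, hyz⟩ :=
    exists_adj_adj_of_adj_notMem hG hH.connected.nonempty hu hv huv
  obtain ⟨K, hK, hKcard⟩ := hH.exists_ncard_add_two hk hx hy hz hxy hyz
  have := le_maxKEndedOrder hK
  omega
end

section
/- Let G be a connected graph and let k and λ be positive integers with k ≥ 2. If λ ≥ t_{k+1}/(k+1), then t_k ≥ t_{k+1} − λ + 1. (Theorem 1) -/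
open SimpleGraph

variable {V : Type*}

namespace SimpleGraph

variable {W : Type*} {T : SimpleGraph W}

/-- `v` lies on a geodesic from `r` to `y`. -/
def OnGeodesic (T : SimpleGraph W) (r v y : W) : Prop :=
  T.dist r v + T.dist v y = T.dist r y

/-- The set of vertices of degree one. -/
def leaves (T : SimpleGraph W) : Set W :=
  {v | (T.neighborSet v).ncard = 1}

/-- The vertices lying on a geodesic from `r` to a leaf other than `x`. -/
def prunedVerts (T : SimpleGraph W) (r x : W) : Set W :=
  {v | ∃ y ∈ T.leaves, y ≠ x ∧ T.OnGeodesic r v y}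

lemma Connected.exists_adj_dist_add_one (hT : T.Connected) {u v : W} (huv : u ≠ v) :
    ∃ w, T.Adj u w ∧ T.dist w v + 1 = T.dist u v := by
  obtain ⟨p, hp⟩ := hT.exists_walk_length_eq_dist u v
  cases p with
  | nil => exact absurd rfl huv
  | @cons _ w _ h q =>
    refine ⟨w, h, ?_⟩
    have h₁ := dist_le q
    have h₂ := hT.dist_triangle (u := u) (v := w) (w := v)
    rw [dist_eq_one_iff_adj.mpr h] at h₂
    rw [Walk.length_cons] at hp
    omega

lemma IsTree.eq_of_adj_of_dist_add_one (hT : T.IsTree) {u v a b : W} (ha : T.Adj u a)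
    (hb : T.Adj u b) (hda : T.dist a v + 1 = T.dist u v) (hdb : T.dist b v + 1 = T.dist u v) :
    a = b := by
  obtain ⟨p, hp⟩ := hT.connected.exists_walk_length_eq_dist a v
  obtain ⟨q, hq⟩ := hT.connected.exists_walk_length_eq_dist b v
  have h₁ : (Walk.cons ha p).IsPath := Walk.isPath_of_length_eq_dist _ (by simp [hp, hda])
  have h₂ : (Walk.cons hb q).IsPath := Walk.isPath_of_length_eq_dist _ (by simp [hq, hdb])
  have h := congrArg Walk.snd ((hT.existsUnique_path u v).unique h₁ h₂)
  simpa using h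

/-- A neighbor of `v` towards `r` lies on every geodesic from `r` through `v`. -/
lemma Connected.onGeodesic_of_adj_towards_root (hT : T.Connected) {r v y w : W}
    (h : T.OnGeodesic r v y) (hw : T.Adj v w) (hd : T.dist w r + 1 = T.dist v r) :
    T.OnGeodesic r w y := by
  have h₁ := hT.dist_triangle (u := w) (v := v) (w := y)
  have h₂ := hT.dist_triangle (u := r) (v := w) (w := y)
  rw [dist_eq_one_iff_adj.mpr hw.symm] at h₁
  rw [dist_comm, dist_comm (u := v)] at hd
  unfold OnGeodesic at *
  omega

/-- The next vertex on a geodesic from `r` through `v` to `y`. -/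
lemma Connected.exists_adj_onGeodesic_away (hT : T.Connected) {r v y : W}
    (h : T.OnGeodesic r v y) (hvy : v ≠ y) :
    ∃ w, T.Adj v w ∧ T.dist r w = T.dist r v + 1 ∧ T.OnGeodesic r w y := by
  obtain ⟨w, hw, hd⟩ := hT.exists_adj_dist_add_one hvy
  have h₁ := hT.dist_triangle (u := r) (v := v) (w := w)
  have h₂ := hT.dist_triangle (u := r) (v := w) (w := y)
  rw [dist_eq_one_iff_adj.mpr hw] at h₁
  unfold OnGeodesic at *
  exact ⟨w, hw, by omega, by omega⟩

lemma IsTree.exists_leaf_onGeodesic [Finite W] [Nontrivial W] (hT : T.IsTree) (r v : W) :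
    ∃ y ∈ T.leaves, T.OnGeodesic r v y := by
  obtain ⟨y, hy, hmax⟩ := Set.exists_max_image {y | T.OnGeodesic r v y} (T.dist r)
    (Set.toFinite _) ⟨v, by simp [OnGeodesic]⟩
  have hconn := hT.connected
  have hcloser : ∀ w, T.Adj y w → T.dist w r + 1 = T.dist y r := by
    intro w hw
    have h₁ := hT.dist_eq_dist_add_one_of_adj r hw
    rw [dist_comm, dist_comm (u := y)]
    rcases h₁ with h₁ | h₁
    · omega
    · have h₂ := hconn.dist_triangle (u := v) (v := y) (w := w)
      have h₃ := hconn.dist_triangle (u := r) (v := v) (w := w)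
      rw [dist_eq_one_iff_adj.mpr hw] at h₂
      have h₄ := hmax w (by simp only [Set.mem_ofPred_eq, OnGeodesic] at *; omega)
      omega
  refine ⟨y, ?_, hy⟩
  obtain ⟨w, hw⟩ := hconn.preconnected.exists_adj_of_nontrivial y
  refine Set.ncard_eq_one.mpr ⟨w, Set.eq_singleton_iff_unique_mem.mpr ⟨hw, fun z hz ↦ ?_⟩⟩
  exact hT.eq_of_adj_of_dist_add_one hz hw (hcloser z hz) (hcloser w hw)

lemma IsTree.exists_three_le_ncard_neighborSet [Finite W] (hT : T.IsTree) (h : 3 ≤ T.leaves.ncard) :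
    ∃ r, 3 ≤ (T.neighborSet r).ncard := by
  classical
  have := Fintype.ofFinite W
  by_contra! hlt
  have hdeg : ∀ v, (T.neighborSet v).ncard = T.degree v := fun v ↦ by
    rw [Set.ncard_eq_toFinset_card', Set.toFinset_card, card_neighborSet_eq_degree]
  have hsum := T.sum_degrees_eq_twice_card_edges
  have hedge := hT.card_edgeFinset
  have hbound : ∑ v, (T.degree v + if v ∈ T.leaves then 1 else 0) ≤ ∑ _v : W, 2 := by
    refine Finset.sum_le_sum fun v _ ↦ ?_
    have h₁ := hlt v
    have h₂ : v ∈ T.leaves ↔ T.degree v = 1 := by rw [← hdeg]; rfl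
    rw [hdeg] at h₁
    split_ifs <;> grind
  rw [Finset.sum_add_distrib, Finset.sum_boole, Finset.sum_const, Finset.card_univ] at hbound
  rw [Set.ncard_eq_toFinset_card'] at h
  have : T.leaves.toFinset = Finset.univ.filter (· ∈ T.leaves) := by ext; simp
  rw [this] at h
  simp at hbound
  omega

lemma IsTree.induce_prunedVerts (hT : T.IsTree) {r x : W} (h : 3 ≤ T.leaves.ncard) :
    (T.induce (T.prunedVerts r x)).IsTree := by
  obtain ⟨y, hy, hyx⟩ := Set.exists_ne_of_one_lt_ncard (by omega : 1 < T.leaves.ncard) x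
  have hr : r ∈ T.prunedVerts r x := ⟨y, hy, hyx, by simp [OnGeodesic]⟩
  have hreach : ∀ n v (hv : v ∈ T.prunedVerts r x), T.dist v r = n →
      (T.induce (T.prunedVerts r x)).Reachable ⟨v, hv⟩ ⟨r, hr⟩ := by
    intro n
    induction n with
    | zero =>
      intro v hv hd
      obtain rfl := hT.connected.dist_eq_zero_iff.mp hd
      rfl
    | succ n ih =>
      intro v hv hd
      obtain ⟨w, hw, hwd⟩ := hT.connected.exists_adj_dist_add_one (u := v) (v := r)
        (by rintro rfl; simp at hd)
      obtain ⟨z, hz, hzx, hvz⟩ := id hv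
      have hwU : w ∈ T.prunedVerts r x :=
        ⟨z, hz, hzx, hT.connected.onGeodesic_of_adj_towards_root hvz hw hwd⟩
      refine Reachable.trans (Adj.reachable ?_) (ih w hwU (by omega))
      exact hw
  have : Nonempty (T.prunedVerts r x) := ⟨⟨r, hr⟩⟩
  exact ⟨⟨fun u v ↦ (hreach _ u u.2 rfl).trans (hreach _ v v.2 rfl).symm⟩,
    hT.isAcyclic.induce _⟩

lemma IsTree.mem_leaves_of_mem_prunedVerts [Finite W] (hT : T.IsTree) {r x v : W}
    (hr : 3 ≤ (T.neighborSet r).ncard) (hv : v ∈ T.prunedVerts r x)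
    (hdeg : (T.neighborSet v ∩ T.prunedVerts r x).ncard = 1) : v ∈ T.leaves ∧ v ≠ x := by
  have hconn := hT.connected
  obtain ⟨a, ha⟩ := Set.ncard_eq_one.mp hdeg
  have huniq : ∀ b, T.Adj v b → b ∈ T.prunedVerts r x → b = a := fun b hb hbU ↦
    Set.mem_singleton_iff.mp (ha ▸ ⟨hb, hbU⟩)
  obtain ⟨y, hy, hyx, hvy⟩ := hv
  rcases eq_or_ne v y with rfl | hne
  · exact ⟨hy, hyx⟩
  exfalso
  rcases eq_or_ne v r with rfl | hvr
  · -- At most one neighbor of the root lies outside the pruned set.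
    obtain ⟨b, hb, hba⟩ := Set.exists_ne_of_one_lt_ncard (by omega : 1 < (T.neighborSet v).ncard) a
    obtain ⟨c, hc, hcb⟩ := Set.exists_ne_of_one_lt_ncard
      (s := T.neighborSet v \ {a}) (by
        have := Set.le_ncard_sdiff {a} (T.neighborSet v)
        simp at this
        omega) b
    have : Nontrivial W := ⟨⟨b, a, hba⟩⟩
    have hx : ∀ d, T.Adj v d → d ≠ a → T.dist d x + 1 = T.dist v x := by
      intro d hd hda
      obtain ⟨z, hz, hvz⟩ := hT.exists_leaf_onGeodesic v d
      have hzx : z = x := by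
        by_contra hzx
        exact hda (huniq d hd ⟨z, hz, hzx, hvz⟩)
      subst hzx
      unfold OnGeodesic at hvz
      rw [dist_eq_one_iff_adj.mpr hd] at hvz
      omega
    exact hcb (hT.eq_of_adj_of_dist_add_one hc.1 hb (hx c hc.1 hc.2) (hx b hb hba))
  · obtain ⟨p, hp, hpd⟩ := hconn.exists_adj_dist_add_one hvr
    obtain ⟨c, hc, hcd, hcy⟩ := hconn.exists_adj_onGeodesic_away hvy hne
    have h₁ := huniq p hp ⟨y, hy, hyx, hconn.onGeodesic_of_adj_towards_root hvy hp hpd⟩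
    have h₂ := huniq c hc ⟨y, hy, hyx, hcy⟩
    rw [dist_comm, dist_comm (u := v)] at hpd
    rw [h₂] at hcd
    rw [h₁] at hpd
    omega

/-- A tree with at least three leaves loses a leaf by the removal of a small pendant path. -/
lemma IsTree.exists_isTree_induce_fewer_leaves [Finite W] (hT : T.IsTree) (h : 3 ≤ T.leaves.ncard) :
    ∃ U : Set W, (T.induce U).IsTree ∧
      {v | v ∈ U ∧ (T.neighborSet v ∩ U).ncard = 1}.ncard < T.leaves.ncard ∧
      T.leaves.ncard * Uᶜ.ncard < Nat.card W := by
  classical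
  have := Fintype.ofFinite W
  obtain ⟨r, hr⟩ := hT.exists_three_le_ncard_neighborSet h
  obtain ⟨a, -, b, -, hab⟩ := (Set.one_lt_ncard (s := T.leaves)).mp (by omega)
  have : Nontrivial W := ⟨⟨a, b, hab⟩⟩
  suffices hx : ∃ x ∈ T.leaves, T.leaves.ncard * (T.prunedVerts r x)ᶜ.ncard < Nat.card W by
    obtain ⟨x, hxL, hx⟩ := hx
    refine ⟨T.prunedVerts r x, hT.induce_prunedVerts h, ?_, hx⟩
    refine Set.ncard_lt_ncard ⟨fun v hv ↦ ?_, fun hsub ↦ ?_⟩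
    · exact (hT.mem_leaves_of_mem_prunedVerts hr hv.1 hv.2).1
    · exact (hT.mem_leaves_of_mem_prunedVerts hr (hsub hxL).1 (hsub hxL).2).2 rfl
  by_contra! hbig
  have hdisj : (T.leaves.toFinset : Set W).PairwiseDisjoint
      fun x ↦ (T.prunedVerts r x)ᶜ.toFinset := by
    intro x _ x' _ hne
    refine Finset.disjoint_left.mpr fun v hv hv' ↦ hne ?_
    obtain ⟨y, hy, hvy⟩ := hT.exists_leaf_onGeodesic r v
    have h₁ : y = x := by_contra fun hyx ↦ Set.mem_toFinset.mp hv ⟨y, hy, hyx, hvy⟩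
    have h₂ : y = x' := by_contra fun hyx ↦ Set.mem_toFinset.mp hv' ⟨y, hy, hyx, hvy⟩
    exact h₁.symm.trans h₂
  have hcover : T.leaves.toFinset.biUnion (fun x ↦ (T.prunedVerts r x)ᶜ.toFinset) ⊆
      Finset.univ.erase r := by
    intro v hv
    refine Finset.mem_erase.mpr ⟨?_, Finset.mem_univ _⟩
    rintro rfl
    obtain ⟨x, -, hx⟩ := Finset.mem_biUnion.mp hv
    obtain ⟨y, hy, hyx⟩ := Set.exists_ne_of_one_lt_ncard (by omega : 1 < T.leaves.ncard) x
    exact (Set.mem_toFinset.mp hx) ⟨y, hy, hyx, by simp [OnGeodesic]⟩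
  have hcard := Finset.card_le_card hcover
  rw [Finset.card_biUnion hdisj, Finset.card_erase_of_mem (Finset.mem_univ _),
    Finset.card_univ] at hcard
  have hsum : ∑ _x ∈ T.leaves.toFinset, Nat.card W ≤
      ∑ x ∈ T.leaves.toFinset, T.leaves.ncard * ((T.prunedVerts r x)ᶜ.toFinset).card := by
    refine Finset.sum_le_sum fun x hx ↦ ?_
    rw [← Set.ncard_eq_toFinset_card']
    exact hbig x (Set.mem_toFinset.mp hx)
  rw [Finset.sum_const, ← Finset.mul_sum, smul_eq_mul, ← Set.ncard_eq_toFinset_card',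
    Nat.card_eq_fintype_card] at hsum
  have hle := Nat.le_of_mul_le_mul_left hsum (by omega)
  have : 0 < Fintype.card W := Fintype.card_pos
  omega

end SimpleGraph

namespace SimpleGraph.Subgraph

variable {G : SimpleGraph V}

lemma image_neighborSet_coe (H : G.Subgraph) (v : H.verts) :
    Subtype.val '' H.coe.neighborSet v = H.neighborSet v := by
  ext w
  constructor
  · rintro ⟨w, hw, rfl⟩
    exact hw
  · exact fun hw ↦ ⟨⟨w, H.edge_vert hw.symm⟩, hw, rfl⟩

lemma ncard_leaves_coe (H : G.Subgraph) : H.coe.leaves.ncard = endVertexCount H := by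
  rw [← Set.ncard_image_of_injective _ Subtype.val_injective, endVertexCount]
  congr 1
  ext v
  constructor
  · rintro ⟨v, hv, rfl⟩
    refine ⟨v.2, ?_⟩
    rwa [← image_neighborSet_coe, Set.ncard_image_of_injective _ Subtype.val_injective]
  · rintro ⟨hv, h⟩
    refine ⟨⟨v, hv⟩, ?_, rfl⟩
    rwa [← H.image_neighborSet_coe ⟨v, hv⟩,
      Set.ncard_image_of_injective _ Subtype.val_injective] at h

/-- Inducing on a set of vertices of `H` commutes with coercion to a graph. -/
noncomputable def induceIso (H : G.Subgraph) (U : Set H.verts) :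
    H.coe.induce U ≃g (H.induce (Subtype.val '' U)).coe where
  toEquiv := Equiv.Set.image _ U Subtype.val_injective
  map_rel_iff' := by
    intro a b
    change (H.induce _).Adj a.1 b.1 ↔ H.Adj a.1 b.1
    rw [induce_adj]
    exact ⟨fun h ↦ h.2.2, fun h ↦ ⟨⟨a, a.2, rfl⟩, ⟨b, b.2, rfl⟩, h⟩⟩

lemma endVertexCount_induce (H : G.Subgraph) (U : Set H.verts) :
    endVertexCount (H.induce (Subtype.val '' U)) =
      {v | v ∈ U ∧ (H.coe.neighborSet v ∩ U).ncard = 1}.ncard := by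
  rw [← Set.ncard_image_of_injective _ Subtype.val_injective, endVertexCount]
  have hnbr : ∀ v ∈ U, (H.induce (Subtype.val '' U)).neighborSet v =
      Subtype.val '' (H.coe.neighborSet v ∩ U) := by
    intro v hv
    ext w
    simp only [mem_neighborSet, induce_adj]
    constructor
    · rintro ⟨-, ⟨w, hw, rfl⟩, hadj⟩
      exact ⟨w, ⟨hadj, hw⟩, rfl⟩
    · rintro ⟨w, ⟨hadj, hw⟩, rfl⟩
      exact ⟨⟨v, hv, rfl⟩, ⟨w, hw, rfl⟩, hadj⟩
  congr 1
  ext v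
  constructor
  · rintro ⟨⟨v, hv, rfl⟩, h⟩
    rw [hnbr v hv, Set.ncard_image_of_injective _ Subtype.val_injective] at h
    exact ⟨v, ⟨hv, h⟩, rfl⟩
  · rintro ⟨v, ⟨hv, h⟩, rfl⟩
    refine ⟨⟨v, hv, rfl⟩, ?_⟩
    rw [hnbr v hv, Set.ncard_image_of_injective _ Subtype.val_injective, h]

end SimpleGraph.Subgraph

lemma bddAbove_kEndedOrders [Finite V] (G : SimpleGraph V) (k : ℕ) :
    BddAbove {n | ∃ H : G.Subgraph, IsKEndedTree G k H ∧ H.verts.ncard = n} :=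
  ⟨Nat.card V, by rintro n ⟨H, -, rfl⟩; exact Set.ncard_le_card _⟩

lemma IsKEndedTree.ncard_le_maxKEndedOrder [Finite V] {G : SimpleGraph V} {k : ℕ}
    {H : G.Subgraph} (hH : IsKEndedTree G k H) : H.verts.ncard ≤ maxKEndedOrder G k :=
  le_csSup (bddAbove_kEndedOrders G k) ⟨H, hH, rfl⟩

lemma exists_isKEndedTree_ncard_eq_maxKEndedOrder [Finite V] [Nonempty V] (G : SimpleGraph V)
    {k : ℕ} (hk : 1 ≤ k) :
    ∃ H : G.Subgraph, IsKEndedTree G k H ∧ H.verts.ncard = maxKEndedOrder G k := by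
  refine Nat.sSup_mem ?_ (bddAbove_kEndedOrders G k)
  obtain ⟨v⟩ := ‹Nonempty V›
  exact ⟨_, G.singletonSubgraph v,
    Or.inr ⟨hk, Subgraph.singletonSubgraph_connected, Or.inl (by simp)⟩, rfl⟩

/-- **Theorem 1.** If `G` is connected, `k ≥ 2`, `λ ≥ 1` and `λ ≥ t_{k+1}/(k+1)`,
then `t_k ≥ t_{k+1} - λ + 1`. -/
theorem theorem1 [Fintype V] (G : SimpleGraph V) (hG : G.Connected)
    (k l : ℕ) (hk : 2 ≤ k) (hl : 1 ≤ l)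
    (h : (maxKEndedOrder G (k + 1) : ℚ) / (k + 1) ≤ l) :
    maxKEndedOrder G k + l ≥ maxKEndedOrder G (k + 1) + 1 := by
  have := hG.nonempty
  obtain ⟨H, hH, hcard⟩ := exists_isKEndedTree_ncard_eq_maxKEndedOrder G (Nat.le_add_left 1 k)
  by_cases hHk : IsKEndedTree G k H
  · have := hHk.ncard_le_maxKEndedOrder
    omega
  rcases hH with ⟨htree, hends⟩ | ⟨-, hcycle⟩
  · have hends' : endVertexCount H = k + 1 := by
      by_contra hne
      exact hHk (Or.inl ⟨htree, by omega⟩)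
    rw [← H.ncard_leaves_coe] at hends'
    obtain ⟨U, hU, hfew, hsmall⟩ := htree.exists_isTree_induce_fewer_leaves (by omega)
    have hU' : IsKEndedTree G k (H.induce (Subtype.val '' U)) := by
      refine Or.inl ⟨(H.induceIso U).isTree_iff.mp hU, ?_⟩
      rw [H.endVertexCount_induce]
      omega
    have hle := hU'.ncard_le_maxKEndedOrder
    rw [Subgraph.induce_verts, Set.ncard_image_of_injective _ Subtype.val_injective] at hle
    have hcompl := Set.ncard_add_ncard_compl U
    rw [div_le_iff₀ (by positivity)] at h
    norm_cast at h
    rw [hends', Nat.card_coe_set_eq, hcard] at hsmall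
    rw [Nat.card_coe_set_eq, hcard] at hcompl
    have : Uᶜ.ncard < l := by
      rw [mul_comm l] at h
      exact Nat.lt_of_mul_lt_mul_left (hsmall.trans_le h)
    omega
  · exact absurd (Or.inr ⟨by omega, hcycle⟩) hHk
end
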